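/- For all positive integers N and n ≥ 2: if every red/blue edge-coloring of Γ_{N,N} contains a red rectangle or a blue K_n, then every 2-coloring of K_{2N}^(3) contains a red copy of K_4^(3) or a blue copy of S_n. Consequently, r(K_4^(3), S_n) ≤ 2·gr(Γ_{2,2}, K_n). -/

import Mathlib

/-- Adjacency in the grid graph `K_m □ K_n`. -/
def GridAdj {m n : ℕ} (p q : Fin m × Fin n) : Prop :=
  (p.1 = q.1 ∧ p.2 ≠ q.2) ∨ (p.1 ≠ q.1 ∧ p.2 = q.2)

/-- A red rectangle in an edge-coloring of `Γ_{N,N}` (red = `true`). -/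
def HasRedRect (N : ℕ) (χ : Sym2 (Fin N × Fin N) → Bool) : Prop :=
  ∃ x x' y y' : Fin N, x ≠ x' ∧ y ≠ y' ∧
    χ s((x, y), (x', y)) = true ∧ χ s((x, y'), (x', y')) = true ∧
    χ s((x, y), (x, y')) = true ∧ χ s((x', y), (x', y')) = true

/-- A blue `K_n` in an edge-coloring of `Γ_{N,N}` (blue = `false`). -/
def HasBlueGridClique (N n : ℕ) (χ : Sym2 (Fin N × Fin N) → Bool) : Prop :=
  ∃ S : Finset (Fin N × Fin N), S.card = n ∧
    ∀ p ∈ S, ∀ q ∈ S, p ≠ q → GridAdj p q ∧ χ s(p, q) = false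

/-- A red copy of `K_s^(3)` in a 2-coloring of `K_N^(3)` (red = `true`). -/
def HasRedClique3 (N s : ℕ) (χ : Finset (Fin N) → Bool) : Prop :=
  ∃ S : Finset (Fin N), S.card = s ∧ ∀ T ⊆ S, T.card = 3 → χ T = true

/-- A blue copy of the star `Sₙ` (blue = `false`). -/
def HasBlueStar (N n : ℕ) (χ : Finset (Fin N) → Bool) : Prop :=
  ∃ v : Fin N, ∃ S : Finset (Fin N), v ∉ S ∧ S.card = n ∧
    ∀ a ∈ S, ∀ b ∈ S, a ≠ b → χ {v, a, b} = false

/-- The Ramsey number `r(K₄⁽³⁾, Sₙ)`. -/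
noncomputable def ramseyK4Star (n : ℕ) : ℕ :=
  sInf {N : ℕ | ∀ χ : Finset (Fin N) → Bool, HasRedClique3 N 4 χ ∨ HasBlueStar N n χ}

/-- The grid Ramsey number `gr(Γ₂,₂, K_n)`. -/
noncomputable def gridRamsey22 (n : ℕ) : ℕ :=
  sInf {N : ℕ | ∀ χ : Sym2 (Fin N × Fin N) → Bool,
    HasRedRect N χ ∨ HasBlueGridClique N n χ}

/-!
Split the `2N` vertices into two halves `L` and `R` of size `N`, and color the grid edge joining
`(x, y)` to `(x', y)` by the color of the triple `{L x, L x', R y}`, and the edge joining `(x, y)`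
to `(x, y')` by the color of `{L x, R y, R y'}`. The four edges of a rectangle are then the four
triples inside `{L x, L x', R y, R y'}`, so a red rectangle is a red `K₄⁽³⁾`; a blue clique lies
on one line of the grid, and the vertex indexing that line is the center of a blue star.

The inequality between the two Ramsey numbers also needs `gr(Γ₂,₂, K_n)` to be finite. Without a
blue `K_n`, every row has a red edge within the first `n` columns, so many rows have it in the same
pair of columns. By Ramsey's theorem many of these rows are pairwise joined by red edges in the
first column, and two of them are joined by a red edge in the second.
-/

open Finset

section Ramsey

/-- The Erdős–Szekeres form of Ramsey's theorem for graphs. -/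
theorem exists_isNClique_or_isNClique_compl {α : Type*} (G : SimpleGraph α) (s t : ℕ)
    (W : Finset α) (hW : (s + t).choose s ≤ #W) :
    (∃ S ⊆ W, G.IsNClique (s + 1) S) ∨ ∃ S ⊆ W, Gᶜ.IsNClique (t + 1) S := by
  classical
  induction s generalizing t W with
  | zero =>
    obtain ⟨v, hv⟩ : W.Nonempty := by simpa using hW
    exact .inl ⟨{v}, by simpa using hv, by simp⟩
  | succ s ihs =>
    induction t generalizing W with
    | zero =>
      obtain ⟨v, hv⟩ : W.Nonempty := by simpa using hW
      exact .inr ⟨{v}, by simpa using hv, by simp⟩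
    | succ t iht =>
      obtain ⟨v, hv⟩ : W.Nonempty := card_pos.mp ((Nat.choose_pos (by lia)).trans_le hW)
      let A := {w ∈ W.erase v | G.Adj v w}
      let B := {w ∈ W.erase v | ¬ G.Adj v w}
      have hAW : A ⊆ W := (filter_subset _ _).trans (erase_subset _ _)
      have hBW : B ⊆ W := (filter_subset _ _).trans (erase_subset _ _)
      have hadj : ∀ w ∈ A, G.Adj v w := fun w hw ↦ (mem_filter.mp hw).2
      have hadj_compl : ∀ w ∈ B, Gᶜ.Adj v w := by grind [SimpleGraph.compl_adj]
      have hcard : #A + #B + 1 = #W := by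
        rw [card_filter_add_card_filter_not, card_erase_add_one hv]
      have hpascal : (s + 1 + (t + 1)).choose (s + 1) =
          (s + (t + 1)).choose s + (s + 1 + t).choose (s + 1) := by
        rw [← add_assoc, Nat.choose_succ_succ, add_right_comm s 1 t, add_assoc s t 1]
      obtain hA | hB : (s + (t + 1)).choose s ≤ #A ∨ (s + 1 + t).choose (s + 1) ≤ #B := by lia
      · refine (ihs (t + 1) A hA).imp ?_ fun ⟨S, hSA, hS⟩ ↦ ⟨S, hSA.trans hAW, hS⟩
        rintro ⟨S, hSA, hS⟩
        exact ⟨insert v S, insert_subset hv (hSA.trans hAW), hS.insert fun w hw ↦ hadj w (hSA hw)⟩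
      · refine (iht B hB).imp (fun ⟨S, hSB, hS⟩ ↦ ⟨S, hSB.trans hBW, hS⟩) ?_
        rintro ⟨S, hSB, hS⟩
        exact ⟨insert v S, insert_subset hv (hSB.trans hBW),
          hS.insert fun w hw ↦ hadj_compl w (hSB hw)⟩

end Ramsey

section Hypergraph

variable {M : ℕ} {χ : Finset (Fin M) → Bool}

theorem hasRedClique3_four {a b c d : Fin M} (hnodup : [a, b, c, d].Nodup)
    (hbcd : χ {b, c, d} = true) (hacd : χ {a, c, d} = true)
    (habd : χ {a, b, d} = true) (habc : χ {a, b, c} = true) : HasRedClique3 M 4 χ := by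
  have hcard : #{a, b, c, d} = 4 := by simpa using List.toFinset_card_of_nodup hnodup
  refine ⟨{a, b, c, d}, hcard, fun T hT hT3 ↦ ?_⟩
  obtain ⟨z, hzT, hz⟩ := exists_eq_insert_iff.mpr ⟨hT, by rw [hT3, hcard]⟩
  have hT_eq : T = ({a, b, c, d} : Finset (Fin M)).erase z := by rw [← hz, erase_insert hzT]
  obtain rfl | rfl | rfl | rfl : z = a ∨ z = b ∨ z = c ∨ z = d := by
    simpa [hz] using mem_insert_self z T
  · rwa [show T = {b, c, d} by grind]
  · rwa [show T = {a, c, d} by grind]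
  · rwa [show T = {a, b, d} by grind]
  · rwa [show T = {a, b, c} by grind]

theorem hasBlueStar_of_injOn {ι : Type*} {f : ι → Fin M} {S : Finset ι} (v : Fin M)
    (hf : Set.InjOn f S) (hv : ∀ i ∈ S, v ≠ f i)
    (hblue : ∀ i ∈ S, ∀ j ∈ S, i ≠ j → χ {v, f i, f j} = false) : HasBlueStar M #S χ := by
  refine ⟨v, S.image f, by grind, card_image_of_injOn hf, ?_⟩
  simp only [forall_mem_image]
  exact fun i hi j hj hij ↦ hblue i hi j hj (ne_of_apply_ne f hij)

end Hypergraph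

section Grid

variable {N n : ℕ} {χ : Sym2 (Fin N × Fin N) → Bool}

theorem forall_fst_eq_or_forall_snd_eq_of_gridAdj {m n : ℕ} {S : Finset (Fin m × Fin n)}
    (hS : ∀ p ∈ S, ∀ q ∈ S, p ≠ q → GridAdj p q) :
    (∀ p ∈ S, ∀ q ∈ S, p.1 = q.1) ∨ ∀ p ∈ S, ∀ q ∈ S, p.2 = q.2 := by
  have hshare : ∀ p ∈ S, ∀ q ∈ S, p.1 = q.1 ∨ p.2 = q.2 := fun p hp q hq ↦
    (eq_or_ne p q).elim (fun hpq ↦ .inl (congrArg Prod.fst hpq))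
      fun hpq ↦ (hS p hp q hq hpq).imp And.left And.right
  rw [or_iff_not_imp_left]
  push Not
  rintro ⟨p, hp, q, hq, hpq⟩
  have hpq_snd : p.2 = q.2 := (hshare p hp q hq).resolve_left hpq
  have hrow : ∀ r ∈ S, r.2 = p.2 := fun r hr ↦ by
    by_contra hne
    have hrp : r.1 = p.1 := (hshare r hr p hp).resolve_right hne
    have hrq : r.1 = q.1 := (hshare r hr q hq).resolve_right (hpq_snd ▸ hne)
    exact hpq (hrp.symm.trans hrq)
  exact fun r hr r' hr' ↦ (hrow r hr).trans (hrow r' hr').symm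

theorem exists_red_edge_of_not_hasBlueGridClique (h : ¬ HasBlueGridClique N n χ) {ι : Type*}
    {line : ι → Fin N × Fin N} (hline : ∀ a b, a ≠ b → GridAdj (line a) (line b))
    {S : Finset ι} (hS : n ≤ #S) :
    ∃ a ∈ S, ∃ b ∈ S, a ≠ b ∧ χ s(line a, line b) = true := by
  classical
  have hinj : Function.Injective line := fun a b hab ↦ by
    by_contra hne
    simpa [GridAdj, hab] using hline a b hne
  by_contra! hblue
  obtain ⟨T, hTS, hT⟩ := exists_subset_card_eq hS
  refine h ⟨T.image line, (card_image_of_injective T hinj).trans hT, ?_⟩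
  simp only [forall_mem_image]
  intro a ha b hb hab
  have hne : a ≠ b := ne_of_apply_ne line hab
  exact ⟨hline a b hne, by simpa using hblue a (hTS ha) b (hTS hb) hne⟩

theorem exists_red_edge_in_row (h : ¬ HasBlueGridClique N n χ) {C : Finset (Fin N)}
    (hC : n ≤ #C) (y : Fin N) : ∃ x ∈ C, ∃ x' ∈ C, x ≠ x' ∧ χ s((x, y), (x', y)) = true :=
  exists_red_edge_of_not_hasBlueGridClique h (fun _ _ hne ↦ .inr ⟨hne, rfl⟩) hC

theorem exists_red_edge_in_column (h : ¬ HasBlueGridClique N n χ) {W : Finset (Fin N)}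
    (hW : n ≤ #W) (x : Fin N) : ∃ y ∈ W, ∃ y' ∈ W, y ≠ y' ∧ χ s((x, y), (x, y')) = true :=
  exists_red_edge_of_not_hasBlueGridClique h (fun _ _ hne ↦ .inl ⟨rfl, hne⟩) hW

theorem exists_columns_with_many_red_rows (h : ¬ HasBlueGridClique N n χ) (hnN : n ≤ N) {k : ℕ}
    (hk : (n * n - n) * k < N) :
    ∃ x x' : Fin N, x ≠ x' ∧ ∃ W : Finset (Fin N), k < #W ∧
      ∀ y ∈ W, χ s((x, y), (x', y)) = true := by
  obtain ⟨C, -, hC⟩ := exists_subset_card_eq (s := (univ : Finset (Fin N))) (by simpa using hnN)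
  choose x hx x' hx' hne hred using exists_red_edge_in_row h hC.ge
  obtain ⟨⟨a, a'⟩, ha, hW⟩ := exists_lt_card_fiber_of_mul_lt_card_of_maps_to
    (s := univ) (t := C.offDiag) (f := fun y ↦ (x y, x' y)) (n := k)
    (fun y _ ↦ mem_offDiag.mpr ⟨hx y, hx' y, hne y⟩) (by simpa [offDiag_card, hC] using hk)
  refine ⟨a, a', (mem_offDiag.mp ha).2.2, _, hW, fun y hy ↦ ?_⟩
  obtain ⟨rfl, rfl⟩ := Prod.mk.inj (mem_filter.mp hy).2
  exact hred y

theorem hasRedRect_of_many_red_rows (h : ¬ HasBlueGridClique N n χ) {x x' : Fin N} (hx : x ≠ x')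
    {W : Finset (Fin N)} (hW : (n + n).choose n ≤ #W)
    (hred : ∀ y ∈ W, χ s((x, y), (x', y)) = true) : HasRedRect N χ := by
  let G : SimpleGraph (Fin N) := .fromEdgeSet {e | χ (e.map (Prod.mk x)) = true}
  have hG (y y' : Fin N) : G.Adj y y' ↔ χ s((x, y), (x, y')) = true ∧ y ≠ y' := by simp [G]
  rcases exists_isNClique_or_isNClique_compl G n n W hW with ⟨S, hSW, hS⟩ | ⟨S, -, hS⟩
  · obtain ⟨y, hy, y', hy', hne, hcol'⟩ :=
      exists_red_edge_in_column h (n.le_succ.trans hS.card_eq.ge) x'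
    have hcol := ((hG y y').mp (hS.isClique hy hy' hne)).1
    exact ⟨x, x', y, y', hx, hne, hred y (hSW hy), hred y' (hSW hy'), hcol, hcol'⟩
  · obtain ⟨y, hy, y', hy', hne, hcol⟩ :=
      exists_red_edge_in_column h (n.le_succ.trans hS.card_eq.ge) x
    exact absurd ((hG y y').mpr ⟨hcol, hne⟩) (hS.isClique hy hy' hne).2

theorem exists_forall_hasRedRect_or_hasBlueGridClique (n : ℕ) :
    ∃ N, ∀ χ : Sym2 (Fin N × Fin N) → Bool, HasRedRect N χ ∨ HasBlueGridClique N n χ := by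
  refine ⟨(n * n - n) * (n + n).choose n + n + 1, fun χ ↦ or_iff_not_imp_right.mpr fun h ↦ ?_⟩
  obtain ⟨x, x', hx, W, hW, hred⟩ := exists_columns_with_many_red_rows h (by lia)
    (k := (n + n).choose n) (by lia)
  exact hasRedRect_of_many_red_rows h hx hW.le hred

end Grid

section GridColoring

variable {α β V : Type*} [DecidableEq α] [DecidableEq β] [DecidableEq V]

/-- The edge coloring of the grid `α × β` induced by a coloring `χ` of triples, where `L` and `R`
place the column and row indices among the vertices: an edge gets the color of the set of all its
coordinates. These are three vertices because the endpoints share one coordinate. -/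
def gridColoring (L : α → V) (R : β → V) (χ : Finset V → Bool) (e : Sym2 (α × β)) : Bool :=
  χ (e.toFinset.biUnion fun p ↦ {L p.1, R p.2})

theorem gridColoring_row (L : α → V) (R : β → V) (χ : Finset V → Bool) (x x' : α) (y : β) :
    gridColoring L R χ s((x, y), (x', y)) = χ {L x, L x', R y} := by
  rw [gridColoring, Sym2.toFinset_mk_eq, biUnion_insert, singleton_biUnion]
  congr 1
  grind

theorem gridColoring_column (L : α → V) (R : β → V) (χ : Finset V → Bool) (x : α) (y y' : β) :
    gridColoring L R χ s((x, y), (x, y')) = χ {L x, R y, R y'} := by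
  rw [gridColoring, Sym2.toFinset_mk_eq, biUnion_insert, singleton_biUnion]
  congr 1
  grind

end GridColoring

section Reduction

variable {N M n : ℕ} {L R : Fin N → Fin M} {χ : Finset (Fin M) → Bool}

theorem hasRedClique3_of_hasRedRect_gridColoring (hL : L.Injective) (hR : R.Injective)
    (hLR : ∀ x y, L x ≠ R y) (h : HasRedRect N (gridColoring L R χ)) : HasRedClique3 M 4 χ := by
  obtain ⟨x, x', y, y', hx, hy, hrow, hrow', hcol, hcol'⟩ := h
  rw [gridColoring_row] at hrow hrow'
  rw [gridColoring_column] at hcol hcol'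
  have hnodup : [L x, L x', R y, R y'].Nodup := by simp [hL.eq_iff, hR.eq_iff, hLR, hx, hy]
  exact hasRedClique3_four hnodup hcol' hcol hrow' hrow

theorem hasBlueStar_of_hasBlueGridClique_gridColoring (hL : L.Injective) (hR : R.Injective)
    (hLR : ∀ x y, L x ≠ R y) (hn : 0 < n) (h : HasBlueGridClique N n (gridColoring L R χ)) :
    HasBlueStar M n χ := by
  obtain ⟨S, rfl, hS⟩ := h
  obtain ⟨⟨x₀, y₀⟩, hp₀⟩ := card_pos.mp hn
  rcases forall_fst_eq_or_forall_snd_eq_of_gridAdj fun p hp q hq hpq ↦ (hS p hp q hq hpq).1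
    with hcol | hrow
  · refine hasBlueStar_of_injOn (f := fun p ↦ R p.2) (L x₀)
      (fun p hp q hq hpq ↦ Prod.ext (hcol p hp q hq) (hR hpq)) (fun p _ ↦ hLR x₀ p.2) ?_
    rintro ⟨x, y⟩ hp ⟨x', y'⟩ hq hpq
    obtain rfl : x = x₀ := hcol _ hp _ hp₀
    obtain rfl : x = x' := hcol _ hp _ hq
    rw [← gridColoring_column L R χ]
    exact (hS _ hp _ hq hpq).2
  · refine hasBlueStar_of_injOn (f := fun p ↦ L p.1) (R y₀)
      (fun p hp q hq hpq ↦ Prod.ext (hL hpq) (hrow p hp q hq)) (fun p _ ↦ (hLR p.1 y₀).symm) ?_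
    rintro ⟨x, y⟩ hp ⟨x', y'⟩ hq hpq
    obtain rfl : y = y₀ := hrow _ hp _ hp₀
    obtain rfl : y = y' := hrow _ hp _ hq
    rw [show ({R y, L x, L x'} : Finset (Fin M)) = {L x, L x', R y} by grind,
      ← gridColoring_row L R χ]
    exact (hS _ hp _ hq hpq).2

theorem hasRedClique3_or_hasBlueStar_of_grid (hNM : 2 * N ≤ M) (hn : 0 < n)
    (h : ∀ χ : Sym2 (Fin N × Fin N) → Bool, HasRedRect N χ ∨ HasBlueGridClique N n χ)
    (χ : Finset (Fin M) → Bool) : HasRedClique3 M 4 χ ∨ HasBlueStar M n χ := by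
  let L (i : Fin N) : Fin M := ⟨i, by lia⟩
  let R (i : Fin N) : Fin M := ⟨N + i, by lia⟩
  have hL : L.Injective := fun i j hij ↦ by grind
  have hR : R.Injective := fun i j hij ↦ by grind
  have hLR (i j : Fin N) : L i ≠ R j := by grind
  exact (h (gridColoring L R χ)).imp (hasRedClique3_of_hasRedRect_gridColoring hL hR hLR)
    (hasBlueStar_of_hasBlueGridClique_gridColoring hL hR hLR hn)

end Reduction

/-- For all positive `N` and `n ≥ 2`: if every red/blue edge-coloring of `Γ_{N,N}`
contains a red rectangle or a blue `K_n`, then every 2-coloring of `K_{2N}^(3)` contains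
a red `K₄⁽³⁾` or a blue `Sₙ`. Consequently, `r(K₄⁽³⁾, Sₙ) ≤ 2 · gr(Γ₂,₂, K_n)`. -/
theorem ramsey_le_two_gridRamsey (N n : ℕ) (hN : 0 < N) (hn : 2 ≤ n) :
    ((∀ χ : Sym2 (Fin N × Fin N) → Bool, HasRedRect N χ ∨ HasBlueGridClique N n χ) →
      ∀ χ : Finset (Fin (2 * N)) → Bool,
        HasRedClique3 (2 * N) 4 χ ∨ HasBlueStar (2 * N) n χ) ∧
    ramseyK4Star n ≤ 2 * gridRamsey22 n := by
  refine ⟨hasRedClique3_or_hasBlueStar_of_grid le_rfl (by lia), Nat.sInf_le ?_⟩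
  have hgr := Nat.sInf_mem (exists_forall_hasRedRect_or_hasBlueGridClique n)
  exact hasRedClique3_or_hasBlueStar_of_grid le_rfl (by lia) hgr
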